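/- arXiv:2406.07821 — 2 statements merged into one kernel-verified Lean document; each statement's English description precedes it below -/
import Mathlib

section
/- For integers $t \ge 1$ and $r \ge 2$, there exists $N$ such that for all $n \ge N$ the following holds. Let $\mathcal{G}$ be a normal subset of $\mathcal{T}_{n,r,t}$ such that $\{G \in \mathcal{G} : H^G \in \mathrm{EX}^2(\mathcal{H}^{\mathcal{G}})\} \subseteq \bigcup_{1 \le i \le r} \mathcal{G}_i$. Then $\mathrm{SPEX}(\mathcal{G}) = \bigcup_{i : n_i = \lfloor n/r \rfloor} \mathrm{SPEX}(\mathcal{G}_i)$; that is, a graph $G \in \mathcal{G}$ has maximum spectral radius in $\mathcal{G}$ if and only if $G \in \mathcal{G}_i$ for some part $V_i$ of size $\lfloor n/r \rfloor$ and $G$ has maximum spectral radius in $\mathcal{G}_i$. -/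
open Finset Matrix SimpleGraph
open scoped Classical

/-- `walkCount G ℓ u` is the number of walks of length `ℓ` in `G` starting at `u`
(the quantity `w^ℓ_G(u)` of the paper, with `walkCount G 0 u = 1`). -/
noncomputable def walkCount {V : Type*} [Fintype V] (G : SimpleGraph V) : ℕ → V → ℕ
  | 0, _ => 1
  | ℓ + 1, u => ∑ v ∈ Finset.univ.filter (fun v => G.Adj u v), walkCount G ℓ v

/-- `totalWalks G ℓ = W^ℓ(G) = ∑_u w^ℓ_G(u)`, the number of walks of length `ℓ` in `G`. -/
noncomputable def totalWalks {V : Type*} [Fintype V] (G : SimpleGraph V) (ℓ : ℕ) : ℕ :=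
  ∑ u, walkCount G ℓ u

/-- The spectral radius `ρ(G)` of a graph `G`: the largest eigenvalue of its
adjacency matrix. -/
noncomputable def spectralRad {V : Type*} [Fintype V] (G : SimpleGraph V) : ℝ :=
  sSup {μ : ℝ | ∃ x : V → ℝ, x ≠ 0 ∧ (G.adjMatrix ℝ) *ᵥ x = μ • x}
/-- `EXiter ℓ ℋ = EX^ℓ(ℋ)`: the members of `ℋ` that successively maximize
`W¹, W², …, W^ℓ`. -/
noncomputable def EXiter {V : Type*} [Fintype V] :
    ℕ → Set (SimpleGraph V) → Set (SimpleGraph V)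
  | 0, ℋ => ℋ
  | ℓ + 1, ℋ =>
      {H ∈ EXiter ℓ ℋ | ∀ H' ∈ EXiter ℓ ℋ, totalWalks H' (ℓ + 1) ≤ totalWalks H (ℓ + 1)}

/-- `SPEXset 𝒢`: the members of `𝒢` with maximum spectral radius. -/
noncomputable def SPEXset {V : Type*} [Fintype V] (𝒢 : Set (SimpleGraph V)) :
    Set (SimpleGraph V) :=
  {G ∈ 𝒢 | ∀ G' ∈ 𝒢, spectralRad G' ≤ spectralRad G}

/-- `emb n r G = H^G`: the graph of the edges of `G` beyond the Turán graph `T(n,r)`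
(whose parts are the residue classes `V_i = {v : (v : ℕ) % r = i}`). -/
def emb (n r : ℕ) (G : SimpleGraph (Fin n)) : SimpleGraph (Fin n) :=
  G \ turanGraph n r

/-- `TuranFam n r t = 𝒯_{n,r,t}`: the graphs obtained from the Turán graph `T(n,r)` by
embedding `t` edges into its parts. -/
noncomputable def TuranFam (n r t : ℕ) : Set (SimpleGraph (Fin n)) :=
  {G | turanGraph n r ≤ G ∧
    (∀ u v : Fin n, (emb n r G).Adj u v → (u : ℕ) % r = (v : ℕ) % r) ∧
    (emb n r G).edgeFinset.card = t}

/-- `inPart n r i G`: all embedded edges of `G` lie inside the part `V_i` (so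
`H^G = H^G_i`). -/
def inPart (n r : ℕ) (i : Fin r) (G : SimpleGraph (Fin n)) : Prop :=
  ∀ u v : Fin n, (emb n r G).Adj u v → (u : ℕ) % r = (i : ℕ)

/-- `classSet n r 𝒢 i = 𝒢_i`. -/
def classSet (n r : ℕ) (𝒢 : Set (SimpleGraph (Fin n))) (i : Fin r) :
    Set (SimpleGraph (Fin n)) :=
  {G ∈ 𝒢 | inPart n r i G}

/-- `𝒢` is a normal subset of `𝒯_{n,r,t}`: for any `i ≠ j` and any `G ∈ 𝒢_i` there is
`G' ∈ 𝒢_j` with `H^{G'}` a copy of `H^G`. -/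
def IsNormal (n r : ℕ) (𝒢 : Set (SimpleGraph (Fin n))) : Prop :=
  ∀ i j : Fin r, i ≠ j → ∀ G ∈ classSet n r 𝒢 i, ∃ G' ∈ classSet n r 𝒢 j,
    Nonempty (emb n r G ≃g emb n r G')

/-- `partSize n r i = n_i`: the size of the part `V_i` of the Turán graph `T(n,r)`. -/
def partSize (n r : ℕ) (i : Fin r) : ℕ :=
  (Finset.univ.filter (fun v : Fin n => (v : ℕ) % r = (i : ℕ))).card

/-!
Write `G` as the complete multipartite graph of `T(n,r)` together with the embedded graph `H`. In
the eigenvector equation of `G` at `ρ = ρ(G)`, a vertex in the part `k` sees the total sum of the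
Perron vector minus the sum over `k`, plus its `H`-neighbours. Dividing each part by that constant
turns the Perron vector into the solution `z` of `(ρ I - A_H) z = 1`, so `ρ(G)` solves the secular
equation `∑ k, F k / (1 + F k) = 1`, where `F k` is the sum of `z` over the part `k`. Rayleigh
quotients give a converse: a nonnegative `z` with `ρ z ≤ 1 + A_H z` and secular sum above `1`
certifies `ρ < ρ(G)`.

Since `z u = ∑ ℓ, w^ℓ_H(u) / ρ ^ (ℓ + 1)`, embedding `H` raises the part sums `n_k / ρ` by
`W¹(H) / ρ² + W²(H) / ρ³ + O(ρ⁻⁴)` altogether. Every graph in `𝒯_{n,r,t}` has `W¹ = 2t`, so for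
large `n`, hence large `ρ ≥ ⌊n/r⌋`, a larger `W²` placed in a smallest part wins. For a fixed `H`
a smaller part wins, because the increments of the concave function `x / (1 + x)` decrease.
-/

section RealSymmetricMatrix

variable {V : Type*} [Fintype V] {M : Matrix V V ℝ} {ρ l : ℝ} {y : V → ℝ}

lemma posSemidef_smul_one_sub (hM : M.IsHermitian) (hρ : ρ ∈ upperBounds (spectrum ℝ M)) :
    (ρ • (1 : Matrix V V ℝ) - M).PosSemidef := by
  rw [Matrix.posSemidef_iff_isHermitian_and_spectrum_nonneg, ← Algebra.algebraMap_eq_smul_one,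
    ← spectrum.singleton_sub_eq]
  refine ⟨(isHermitian_diagonal _).sub hM, ?_⟩
  rintro _ ⟨_, rfl, μ, hμ, rfl⟩
  exact sub_nonneg.mpr (hρ hμ)

lemma dotProduct_smul_one_sub_mulVec (ρ : ℝ) (M : Matrix V V ℝ) (y : V → ℝ) :
    y ⬝ᵥ (ρ • (1 : Matrix V V ℝ) - M) *ᵥ y = ρ * (y ⬝ᵥ y) - y ⬝ᵥ M *ᵥ y := by
  rw [sub_mulVec, smul_mulVec, one_mulVec, dotProduct_sub, dotProduct_smul, smul_eq_mul]

lemma dotProduct_mulVec_le_mul_dotProduct_self (hM : M.IsHermitian)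
    (hρ : ρ ∈ upperBounds (spectrum ℝ M)) (y : V → ℝ) : y ⬝ᵥ M *ᵥ y ≤ ρ * (y ⬝ᵥ y) := by
  have h := (posSemidef_smul_one_sub hM hρ).dotProduct_mulVec_nonneg y
  rw [star_trivial, dotProduct_smul_one_sub_mulVec] at h
  linarith

lemma dotProduct_self_pos_of_pos (hy : 0 < y) : 0 < y ⬝ᵥ y :=
  (dotProduct_nonneg_of_nonneg hy.le hy.le).lt_of_ne' (dotProduct_self_eq_zero.not.mpr hy.ne')

lemma le_of_smul_le_mulVec (hM : M.IsHermitian) (hρ : ρ ∈ upperBounds (spectrum ℝ M))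
    (hy : 0 < y) (h : l • y ≤ M *ᵥ y) : l ≤ ρ := by
  refine le_of_mul_le_mul_right ?_ (dotProduct_self_pos_of_pos hy)
  calc l * (y ⬝ᵥ y) = y ⬝ᵥ l • y := by rw [dotProduct_smul, smul_eq_mul]
    _ ≤ y ⬝ᵥ M *ᵥ y := dotProduct_le_dotProduct_of_nonneg_left h hy.le
    _ ≤ ρ * (y ⬝ᵥ y) := dotProduct_mulVec_le_mul_dotProduct_self hM hρ y

lemma lt_of_smul_strongLT_mulVec (hM : M.IsHermitian) (hρ : ρ ∈ upperBounds (spectrum ℝ M))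
    (hy : 0 < y) (h : StrongLT (l • y) (M *ᵥ y)) : l < ρ := by
  obtain ⟨hy0, u, hu⟩ := Pi.lt_def.mp hy
  refine lt_of_mul_lt_mul_right ?_ (dotProduct_self_pos_of_pos hy).le
  calc l * (y ⬝ᵥ y) = y ⬝ᵥ l • y := by rw [dotProduct_smul, smul_eq_mul]
    _ < y ⬝ᵥ M *ᵥ y := Finset.sum_lt_sum
        (fun v _ => mul_le_mul_of_nonneg_left (h v).le (hy0 v))
        ⟨u, mem_univ u, mul_lt_mul_of_pos_left (h u) hu⟩
    _ ≤ ρ * (y ⬝ᵥ y) := dotProduct_mulVec_le_mul_dotProduct_self hM hρ y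

lemma dotProduct_mulVec_le_abs (hM0 : ∀ i j, 0 ≤ M i j) (x : V → ℝ) :
    x ⬝ᵥ M *ᵥ x ≤ |x| ⬝ᵥ M *ᵥ |x| := by
  simp only [dotProduct, mulVec, Finset.mul_sum, Pi.abs_apply]
  refine Finset.sum_le_sum fun u _ => Finset.sum_le_sum fun v _ => ?_
  rw [mul_left_comm, mul_left_comm |x u|, ← abs_mul]
  exact mul_le_mul_of_nonneg_left (le_abs_self _) (hM0 u v)

-- `|x|` has the same norm as a top eigenvector `x` and at least its Rayleigh quotient.
lemma exists_pos_eigenvector (hM : M.IsHermitian) (hM0 : ∀ i j, 0 ≤ M i j)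
    (hρ : IsGreatest (spectrum ℝ M) ρ) : ∃ x : V → ℝ, 0 < x ∧ M *ᵥ x = ρ • x := by
  obtain ⟨x, hx⟩ := (Module.End.hasEigenvalue_iff_mem_spectrum.mpr
    ((spectrum_toLin' M).symm ▸ hρ.1)).exists_hasEigenvector
  have hMx : M *ᵥ x = ρ • x := hx.apply_eq_smul
  have hpsd := posSemidef_smul_one_sub hM hρ.2
  have hself : |x| ⬝ᵥ |x| = x ⬝ᵥ x := by simp [dotProduct]
  have hne : |x| ≠ 0 := fun h => hx.2 (funext fun u => abs_eq_zero.mp (congrFun h u))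
  refine ⟨|x|, (abs_nonneg x).lt_of_ne' hne, ?_⟩
  have hzero : star |x| ⬝ᵥ (ρ • (1 : Matrix V V ℝ) - M) *ᵥ |x| = 0 := by
    refine le_antisymm ?_ (hpsd.dotProduct_mulVec_nonneg _)
    have hle := dotProduct_mulVec_le_abs hM0 x
    rw [hMx, dotProduct_smul, smul_eq_mul] at hle
    rw [star_trivial, dotProduct_smul_one_sub_mulVec, hself]
    exact sub_nonpos.mpr hle
  rw [hpsd.dotProduct_mulVec_zero_iff, sub_mulVec, smul_mulVec, one_mulVec, sub_eq_zero] at hzero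
  exact hzero.symm

end RealSymmetricMatrix

section SpectralRadius

variable {V : Type*} [Fintype V]

lemma spectralRad_eq_sSup_spectrum (G : SimpleGraph V) :
    spectralRad G = sSup (spectrum ℝ (G.adjMatrix ℝ)) := by
  refine congrArg sSup (Set.ext fun μ => ?_)
  rw [← spectrum_toLin', ← Module.End.hasEigenvalue_iff_mem_spectrum]
  exact ⟨fun ⟨x, hx, h⟩ => Module.End.hasEigenvalue_of_hasEigenvector
      (Module.End.hasEigenvector_iff.mpr ⟨Module.End.mem_eigenspace_iff.mpr h, hx⟩),
    fun h => let ⟨x, hx⟩ := h.exists_hasEigenvector; ⟨x, hx.2, hx.apply_eq_smul⟩⟩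

lemma spectralRad_mem_upperBounds_spectrum (G : SimpleGraph V) :
    spectralRad G ∈ upperBounds (spectrum ℝ (G.adjMatrix ℝ)) := fun _ hμ =>
  (le_csSup (finite_real_spectrum (A := G.adjMatrix ℝ)).bddAbove hμ).trans_eq
    (spectralRad_eq_sSup_spectrum G).symm

lemma isGreatest_spectralRad [Nonempty V] (G : SimpleGraph V) :
    IsGreatest (spectrum ℝ (G.adjMatrix ℝ)) (spectralRad G) := by
  refine ⟨?_, spectralRad_mem_upperBounds_spectrum G⟩
  rw [spectralRad_eq_sSup_spectrum]
  refine Set.Nonempty.csSup_mem ?_ (finite_real_spectrum (A := G.adjMatrix ℝ))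
  rw [(G.isHermitian_adjMatrix ℝ).spectrum_real_eq_range_eigenvalues]
  exact Set.range_nonempty _

end SpectralRadius

section Adjacency

variable {V : Type*} [Fintype V] (H : SimpleGraph V)

lemma adjMatrix_mulVec_mono {f g : V → ℝ} (h : f ≤ g) :
    H.adjMatrix ℝ *ᵥ f ≤ H.adjMatrix ℝ *ᵥ g := fun u => by
  simp only [adjMatrix_mulVec_apply]
  exact Finset.sum_le_sum fun v _ => h v

lemma adjMatrix_mulVec_nonneg {f : V → ℝ} (h : 0 ≤ f) : 0 ≤ H.adjMatrix ℝ *ᵥ f := by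
  simpa only [mulVec_zero] using adjMatrix_mulVec_mono H h

lemma dotProduct_adjMatrix_mulVec (f g : V → ℝ) :
    f ⬝ᵥ H.adjMatrix ℝ *ᵥ g = (H.adjMatrix ℝ *ᵥ f) ⬝ᵥ g := by
  rw [dotProduct_mulVec, ← mulVec_transpose, transpose_adjMatrix]

lemma adjMatrix_mulVec_eq_zero_of_isolated (f : V → ℝ) {u : V} (hu : ∀ v, ¬ H.Adj u v) :
    (H.adjMatrix ℝ *ᵥ f) u = 0 := by
  rw [adjMatrix_mulVec_apply]
  exact Finset.sum_eq_zero fun v hv => absurd ((mem_neighborFinset H u v).mp hv) (hu v)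

lemma adjMatrix_mulVec_comp_symm {V' : Type*} [Fintype V'] {H : SimpleGraph V}
    {H' : SimpleGraph V'} (φ : H ≃g H') (f : V → ℝ) :
    H'.adjMatrix ℝ *ᵥ (f ∘ φ.symm) = (H.adjMatrix ℝ *ᵥ f) ∘ φ.symm := by
  ext u
  simp only [mulVec, dotProduct, adjMatrix_apply, Function.comp_apply]
  rw [← Equiv.sum_comp φ.symm.toEquiv fun v => (if H.Adj (φ.symm u) v then 1 else 0) * f v]
  exact Finset.sum_congr rfl fun v _ => by
    simp only [RelIso.coe_fn_toEquiv, φ.symm.map_adj_iff]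

end Adjacency

section MultipartiteEmbed

variable {V K : Type*} {c : V → K} {H : SimpleGraph V}

/-- The complete multipartite graph whose parts are the fibres of `c`, with the edges of `H`
added. For the residue map `c` modulo `r` on `Fin n` this is the Turán graph `T(n,r)` with the
embedded graph `H`. -/
def multipartiteEmbed (c : V → K) (H : SimpleGraph V) : SimpleGraph V :=
  (⊤ : SimpleGraph K).comap c ⊔ H

/-- Every edge of `H` lies inside some fibre of `c`. -/
def RespectsParts (c : V → K) (H : SimpleGraph V) : Prop :=
  ∀ ⦃u v⦄, H.Adj u v → c u = c v

/-- All edges of `H` lie inside the single fibre of `c` over `k`. -/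
def ConfinedTo (c : V → K) (k : K) (H : SimpleGraph V) : Prop :=
  ∀ ⦃u v⦄, H.Adj u v → c u = k

lemma ConfinedTo.respectsParts {k : K} (hH : ConfinedTo c k H) : RespectsParts c H :=
  fun _ _ h => (hH h).trans (hH h.symm).symm

variable [Fintype V]

/-- The sum of `f` over the part indexed by `k`. -/
noncomputable def partSum (c : V → K) (f : V → ℝ) (k : K) : ℝ :=
  ∑ u with c u = k, f u

/-- The number of vertices of the part indexed by `k`. -/
noncomputable def partCard (c : V → K) (k : K) : ℕ :=
  #{u | c u = k}

lemma partSum_nonneg {f : V → ℝ} (hf : 0 ≤ f) (k : K) : 0 ≤ partSum c f k :=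
  Finset.sum_nonneg fun u _ => hf u

lemma partSum_const (s : ℝ) (k : K) : partSum c (fun _ => s) k = partCard c k * s := by
  rw [partSum, partCard, Finset.sum_const, nsmul_eq_mul]

lemma sum_partSum [Fintype K] (c : V → K) (f : V → ℝ) : ∑ k, partSum c f k = ∑ u, f u :=
  Finset.sum_fiberwise _ _ _

lemma partSum_comp_mul (a : K → ℝ) (f : V → ℝ) (k : K) :
    partSum c (fun u => a (c u) * f u) k = a k * partSum c f k := by
  rw [partSum, partSum, Finset.mul_sum]
  exact Finset.sum_congr rfl fun u hu => by rw [(Finset.mem_filter.mp hu).2]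

lemma le_partSum {f : V → ℝ} (hf : 0 ≤ f) (u : V) : f u ≤ partSum c f (c u) :=
  Finset.single_le_sum (fun v _ => hf v) (by simp)

lemma partSum_add_partSum_le_sum {f : V → ℝ} (hf : 0 ≤ f) {j k : K} (hjk : j ≠ k) :
    partSum c f j + partSum c f k ≤ ∑ u, f u := by
  rw [partSum, partSum, ← Finset.sum_union]
  · exact Finset.sum_le_univ_sum_of_nonneg hf
  · exact Finset.disjoint_filter.mpr fun u _ hj hk => hjk (hj.symm.trans hk)

lemma adjMatrix_mulVec_comp_mul (hH : RespectsParts c H) (a : K → ℝ) (f : V → ℝ) (u : V) :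
    (H.adjMatrix ℝ *ᵥ fun v => a (c v) * f v) u = a (c u) * (H.adjMatrix ℝ *ᵥ f) u := by
  rw [adjMatrix_mulVec_apply, adjMatrix_mulVec_apply, Finset.mul_sum]
  exact Finset.sum_congr rfl fun v hv => by rw [hH ((mem_neighborFinset H u v).mp hv)]

lemma adjMatrix_multipartiteEmbed_mulVec (hH : RespectsParts c H) (f : V → ℝ) (u : V) :
    ((multipartiteEmbed c H).adjMatrix ℝ *ᵥ f) u =
      ∑ v, f v - partSum c f (c u) + (H.adjMatrix ℝ *ᵥ f) u := by
  have hadj (v : V) : (multipartiteEmbed c H).Adj u v ↔ c u ≠ c v ∨ H.Adj u v := Iff.rfl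
  simp only [mulVec, dotProduct, adjMatrix_apply, partSum, hadj, Finset.sum_filter,
    ← Finset.sum_sub_distrib, ← Finset.sum_add_distrib]
  refine Finset.sum_congr rfl fun v _ => ?_
  by_cases huv : H.Adj u v
  · simp [huv, hH huv]
  · by_cases hc : c u = c v <;> simp [huv, hc, eq_comm (a := c v)]

lemma le_spectralRad_multipartiteEmbed [Nonempty V] [Nontrivial K] (hH : RespectsParts c H)
    {m : ℕ} (hm : ∀ k, m ≤ partCard c k) : m ≤ spectralRad (multipartiteEmbed c H) := by
  refine le_of_smul_le_mulVec ((multipartiteEmbed c H).isHermitian_adjMatrix ℝ)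
    (spectralRad_mem_upperBounds_spectrum _) (y := fun _ => 1) zero_lt_one fun u => ?_
  obtain ⟨k, hk⟩ := exists_ne (c u)
  have hparts := partSum_add_partSum_le_sum (c := c) (f := fun _ => 1) (fun _ => zero_le_one) hk
  have hnbrs := adjMatrix_mulVec_nonneg H (f := fun _ => 1) (fun _ => zero_le_one) u
  have hmk : (m : ℝ) ≤ partCard c k := mod_cast hm k
  rw [partSum_const, mul_one] at hparts
  rw [adjMatrix_multipartiteEmbed_mulVec hH, Pi.smul_apply, smul_eq_mul, mul_one]
  rw [Pi.zero_apply] at hnbrs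
  linarith

end MultipartiteEmbed

section WalkCount

variable {V V' : Type*} [Fintype V] [Fintype V'] (H : SimpleGraph V) {H' : SimpleGraph V'}

lemma walkCount_one (u : V) : walkCount H 1 u = H.degree u := by
  simp [walkCount, ← card_neighborFinset_eq_degree, neighborFinset_eq_filter]

lemma totalWalks_one : totalWalks H 1 = 2 * #H.edgeFinset := by
  simp only [totalWalks, walkCount_one, sum_degrees_eq_twice_card_edges]

lemma degree_le_totalWalks_one (u : V) : H.degree u ≤ totalWalks H 1 := by
  simp only [totalWalks, walkCount_one]
  exact Finset.single_le_sum (f := fun v => H.degree v) (fun _ _ => Nat.zero_le _)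
    (Finset.mem_univ u)

lemma totalWalks_succ (ℓ : ℕ) : totalWalks H (ℓ + 1) = ∑ u, H.degree u * walkCount H ℓ u := by
  simp only [totalWalks, walkCount, Finset.sum_filter]
  rw [Finset.sum_comm]
  refine Finset.sum_congr rfl fun u _ => ?_
  simp [H.adj_comm _ u, ← Finset.sum_filter, ← card_neighborFinset_eq_degree,
    neighborFinset_eq_filter]

lemma totalWalks_succ_le (ℓ : ℕ) : totalWalks H (ℓ + 1) ≤ totalWalks H 1 * totalWalks H ℓ := by
  rw [totalWalks_succ, totalWalks, totalWalks, Finset.mul_sum]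
  exact Finset.sum_le_sum fun u _ => Nat.mul_le_mul_right _ (degree_le_totalWalks_one H u)

/-- The walk counts `w^ℓ_H` as a real vector. -/
noncomputable def walkVec (ℓ : ℕ) : V → ℝ := fun u => walkCount H ℓ u

lemma walkVec_zero : walkVec H 0 = 1 := by
  ext u
  simp [walkVec, walkCount]

lemma walkVec_succ (ℓ : ℕ) : walkVec H (ℓ + 1) = H.adjMatrix ℝ *ᵥ walkVec H ℓ := by
  ext u
  simp [walkVec, walkCount, adjMatrix_mulVec_apply, neighborFinset_eq_filter]

lemma walkVec_nonneg (ℓ : ℕ) : 0 ≤ walkVec H ℓ := fun _ => Nat.cast_nonneg _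

lemma sum_walkVec (ℓ : ℕ) : ∑ u, walkVec H ℓ u = totalWalks H ℓ := by
  simp [walkVec, totalWalks]

variable {H}

lemma walkVec_comp_symm (φ : H ≃g H') (ℓ : ℕ) : walkVec H ℓ ∘ φ.symm = walkVec H' ℓ := by
  induction ℓ with
  | zero => simp only [walkVec_zero, Pi.one_comp]
  | succ ℓ ih => rw [walkVec_succ, walkVec_succ, ← ih, adjMatrix_mulVec_comp_symm]

lemma totalWalks_congr (φ : H ≃g H') (ℓ : ℕ) : totalWalks H ℓ = totalWalks H' ℓ := by
  rw [← Nat.cast_inj (R := ℝ), ← sum_walkVec, ← sum_walkVec, ← walkVec_comp_symm φ]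
  exact (Equiv.sum_comp φ.symm.toEquiv (walkVec H ℓ)).symm

end WalkCount

section WalkSeries

variable {V V' : Type*} [Fintype V] [Fintype V'] {H : SimpleGraph V} {H' : SimpleGraph V'}
  {ρ : ℝ} {z : V → ℝ} {u : V}

/-- `z` is a nonnegative solution of `(ρ I - A_H) z = 1`. For large `ρ` this is the walk
generating function `z u = ∑ ℓ, w^ℓ_H(u) / ρ ^ (ℓ + 1)`. -/
structure IsWalkSeries (H : SimpleGraph V) (ρ : ℝ) (z : V → ℝ) : Prop where
  nonneg : 0 ≤ z
  smul_eq : ρ • z = 1 + H.adjMatrix ℝ *ᵥ z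

namespace IsWalkSeries

lemma mul_apply_eq (h : IsWalkSeries H ρ z) (u : V) : ρ * z u = 1 + (H.adjMatrix ℝ *ᵥ z) u :=
  congrFun h.smul_eq u

lemma one_le_mul_apply (h : IsWalkSeries H ρ z) (u : V) : 1 ≤ ρ * z u := by
  rw [h.mul_apply_eq]
  exact le_add_of_nonneg_right (adjMatrix_mulVec_nonneg H h.nonneg u)

lemma pos [Nonempty V] (h : IsWalkSeries H ρ z) : 0 < ρ := by
  obtain ⟨u⟩ := ‹Nonempty V›
  exact pos_of_mul_pos_left (zero_lt_one.trans_le (h.one_le_mul_apply u)) (h.nonneg u)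

lemma apply_eq [Nonempty V] (h : IsWalkSeries H ρ z) (u : V) :
    z u = ρ⁻¹ * (1 + (H.adjMatrix ℝ *ᵥ z) u) := by
  rw [← h.mul_apply_eq, inv_mul_cancel_left₀ h.pos.ne']

lemma inv_le_apply [Nonempty V] (h : IsWalkSeries H ρ z) (u : V) : ρ⁻¹ ≤ z u :=
  (inv_le_iff_one_le_mul₀' h.pos).mpr (h.one_le_mul_apply u)

lemma apply_of_isolated [Nonempty V] (h : IsWalkSeries H ρ z) (hu : ∀ v, ¬ H.Adj u v) :
    z u = ρ⁻¹ := by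
  rw [h.apply_eq, adjMatrix_mulVec_eq_zero_of_isolated H z hu, add_zero, mul_one]

lemma comp_symm (h : IsWalkSeries H ρ z) (φ : H ≃g H') : IsWalkSeries H' ρ (z ∘ φ.symm) where
  nonneg u := h.nonneg (φ.symm u)
  smul_eq := by
    rw [adjMatrix_mulVec_comp_symm]
    exact funext fun u => h.mul_apply_eq (φ.symm u)

lemma inv_lt_apply [Nonempty V] (h : IsWalkSeries H ρ z) {v : V} (huv : H.Adj u v) :
    ρ⁻¹ < z u := by
  have hpos : 0 < (H.adjMatrix ℝ *ᵥ z) u := by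
    rw [adjMatrix_mulVec_apply]
    exact Finset.sum_pos
      (fun w _ => (inv_pos.mpr h.pos).trans_le (h.inv_le_apply w))
      ⟨v, (mem_neighborFinset H u v).mpr huv⟩
  rw [h.apply_eq]
  exact lt_mul_of_one_lt_right (inv_pos.mpr h.pos) (lt_add_of_pos_right 1 hpos)

lemma sum_sub_inv_nonneg [Nonempty V] (h : IsWalkSeries H ρ z) : 0 ≤ ∑ u, (z u - ρ⁻¹) :=
  Finset.sum_nonneg fun u _ => sub_nonneg.mpr (h.inv_le_apply u)

lemma sum_sub_inv_pos [Nonempty V] (h : IsWalkSeries H ρ z) {v : V} (huv : H.Adj u v) :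
    0 < ∑ u, (z u - ρ⁻¹) :=
  Finset.sum_pos' (fun w _ => sub_nonneg.mpr (h.inv_le_apply w))
    ⟨u, Finset.mem_univ u, sub_pos.mpr (h.inv_lt_apply huv)⟩

lemma apply_le (h : IsWalkSeries H ρ z) {D : ℕ} (hD : ∀ v, H.degree v ≤ D) (hDρ : D < ρ)
    (u : V) : z u ≤ (ρ - D)⁻¹ := by
  have : Nonempty V := ⟨u⟩
  obtain ⟨w, hw⟩ := Finite.exists_max z
  have hnbrs : (H.adjMatrix ℝ *ᵥ z) w ≤ D * z w := calc
    _ ≤ H.degree w • z w := by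
      rw [adjMatrix_mulVec_apply, ← card_neighborFinset_eq_degree]
      exact Finset.sum_le_card_nsmul _ _ _ fun v _ => hw v
    _ ≤ D * z w := by
      rw [nsmul_eq_mul]
      exact mul_le_mul_of_nonneg_right (mod_cast hD w) (h.nonneg w)
  have hmax : z w * (ρ - D) ≤ 1 := by linarith [h.mul_apply_eq w]
  rw [← one_div]
  exact (hw u).trans ((le_div_iff₀ (sub_pos.mpr hDρ)).mpr hmax)

lemma walkVec_dotProduct [Nonempty V] (h : IsWalkSeries H ρ z) (ℓ : ℕ) :
    walkVec H ℓ ⬝ᵥ z = ρ⁻¹ * (totalWalks H ℓ + walkVec H (ℓ + 1) ⬝ᵥ z) := by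
  have hz : z = ρ⁻¹ • (1 + H.adjMatrix ℝ *ᵥ z) := funext h.apply_eq
  conv_lhs => rw [hz]
  rw [dotProduct_smul, smul_eq_mul, dotProduct_add, dotProduct_one, sum_walkVec,
    dotProduct_adjMatrix_mulVec, ← walkVec_succ]

lemma sum_sub_inv_le [Nonempty V] (h : IsWalkSeries H ρ z) {D : ℕ} (hD : ∀ v, H.degree v ≤ D)
    (hDρ : D < ρ) :
    ∑ u, (z u - ρ⁻¹) ≤ (ρ⁻¹) ^ 2 * (totalWalks H 1 + totalWalks H 2 * (ρ - D)⁻¹) := by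
  have hdot : walkVec H 2 ⬝ᵥ z ≤ totalWalks H 2 * (ρ - D)⁻¹ := by
    rw [← sum_walkVec, dotProduct, Finset.sum_mul]
    exact Finset.sum_le_sum fun u _ =>
      mul_le_mul_of_nonneg_left (h.apply_le hD hDρ u) (walkVec_nonneg H 2 u)
  have hsum : ∑ u, (z u - ρ⁻¹) = walkVec H 0 ⬝ᵥ z - ρ⁻¹ * totalWalks H 0 := by
    simp [walkVec_zero, totalWalks, walkCount, one_dotProduct, mul_comm]
  rw [hsum, h.walkVec_dotProduct 0, h.walkVec_dotProduct 1]
  have hsq : 0 ≤ (ρ⁻¹) ^ 2 := sq_nonneg _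
  linarith [mul_le_mul_of_nonneg_left hdot hsq]

end IsWalkSeries

/-- The first `L` terms of the walk generating function `∑ ℓ, w^ℓ_H / ρ ^ (ℓ + 1)`. -/
noncomputable def truncatedWalkSeries (H : SimpleGraph V) (ρ : ℝ) (L : ℕ) : V → ℝ :=
  ∑ ℓ ∈ range L, (ρ⁻¹) ^ (ℓ + 1) • walkVec H ℓ

lemma truncatedWalkSeries_succ (H : SimpleGraph V) (ρ : ℝ) (L : ℕ) :
    truncatedWalkSeries H ρ (L + 1) =
      ρ⁻¹ • (1 + H.adjMatrix ℝ *ᵥ truncatedWalkSeries H ρ L) := by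
  simp only [truncatedWalkSeries, mulVec_sum, mulVec_smul, ← walkVec_succ, smul_add,
    Finset.smul_sum, smul_smul, ← pow_succ']
  rw [Finset.sum_range_succ', walkVec_zero, zero_add, pow_one, add_comm]

lemma truncatedWalkSeries_nonneg (hρ : 0 ≤ ρ) (L : ℕ) : 0 ≤ truncatedWalkSeries H ρ L :=
  Finset.sum_nonneg fun ℓ _ => smul_nonneg (by positivity) (walkVec_nonneg H ℓ)

lemma smul_truncatedWalkSeries_le (hρ : 0 < ρ) (L : ℕ) :
    ρ • truncatedWalkSeries H ρ (L + 1) ≤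
      1 + H.adjMatrix ℝ *ᵥ truncatedWalkSeries H ρ (L + 1) := by
  conv_lhs => rw [truncatedWalkSeries_succ, smul_inv_smul₀ hρ.ne']
  refine add_le_add_right (adjMatrix_mulVec_mono H ?_) 1
  rw [truncatedWalkSeries, truncatedWalkSeries, Finset.sum_range_succ]
  exact le_add_of_nonneg_right (smul_nonneg (by positivity) (walkVec_nonneg H L))

lemma inv_le_truncatedWalkSeries_succ (hρ : 0 ≤ ρ) (L : ℕ) (u : V) :
    ρ⁻¹ ≤ truncatedWalkSeries H ρ (L + 1) u := by
  rw [truncatedWalkSeries_succ]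
  exact le_mul_of_one_le_right (inv_nonneg.mpr hρ)
    (le_add_of_nonneg_right (adjMatrix_mulVec_nonneg H (truncatedWalkSeries_nonneg hρ L) u))

lemma truncatedWalkSeries_succ_of_isolated (ρ : ℝ) (L : ℕ) (hu : ∀ v, ¬ H.Adj u v) :
    truncatedWalkSeries H ρ (L + 1) u = ρ⁻¹ := by
  simp [truncatedWalkSeries_succ, adjMatrix_mulVec_eq_zero_of_isolated H _ hu]

lemma sum_truncatedWalkSeries_sub_inv (H : SimpleGraph V) (ρ : ℝ) (L : ℕ) :
    ∑ u, (truncatedWalkSeries H ρ (L + 1) u - ρ⁻¹) =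
      ∑ ℓ ∈ range L, (ρ⁻¹) ^ (ℓ + 2) * totalWalks H (ℓ + 1) := by
  have hexcess (u : V) : truncatedWalkSeries H ρ (L + 1) u - ρ⁻¹ =
      ∑ ℓ ∈ range L, (ρ⁻¹) ^ (ℓ + 2) * walkVec H (ℓ + 1) u := by
    simp [truncatedWalkSeries, Finset.sum_range_succ', walkVec_zero]
  simp only [hexcess, ← sum_walkVec, Finset.mul_sum]
  exact Finset.sum_comm

end WalkSeries

section SecularSum

variable {V K : Type*} [Fintype V] {c : V → K} {H : SimpleGraph V} {z : V → ℝ} {ρ : ℝ}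

/-- `z` with each part divided by one plus its sum. This turns a walk series of `H` into an
eigenvector of `multipartiteEmbed c H` when `secularSum c z = 1`. -/
noncomputable def normalizeParts (c : V → K) (z : V → ℝ) : V → ℝ :=
  fun u => (1 + partSum c z (c u))⁻¹ * z u

lemma partSum_lt_sum_of_eigenvector (hH : RespectsParts c H) (hc : ∀ k, ∃ u, c u ≠ k)
    {x : V → ℝ} (hx : 0 < x) (hρ : (multipartiteEmbed c H).adjMatrix ℝ *ᵥ x = ρ • x) (k : K) :
    partSum c x k < ∑ u, x u := by
  obtain ⟨u, hu⟩ := hc k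
  have hx0 : 0 ≤ x := hx.le
  have hsum : 0 < ∑ v, x v := Fintype.sum_pos hx
  have hparts := partSum_add_partSum_le_sum (c := c) hx0 hu
  have hxu := le_partSum (c := c) hx0 u
  by_contra! hk
  have hxu0 : x u = 0 := le_antisymm (by linarith) (hx0 u)
  have heig := congrFun hρ u
  rw [adjMatrix_multipartiteEmbed_mulVec hH, Pi.smul_apply, hxu0, smul_zero] at heig
  have hnbrs := adjMatrix_mulVec_nonneg H hx0 u
  rw [Pi.zero_apply] at hnbrs
  linarith

variable [Fintype K]

/-- The left-hand side of the secular equation `∑ k, F k / (1 + F k) = 1`, where `F k` is the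
sum of `z` over the part `k`. With `z` the walk series of `H` at `ρ`, its solution in `ρ` is
the spectral radius of `multipartiteEmbed c H`. -/
noncomputable def secularSum (c : V → K) (z : V → ℝ) : ℝ :=
  ∑ k, partSum c z k / (1 + partSum c z k)

lemma sum_normalizeParts (c : V → K) (z : V → ℝ) :
    ∑ u, normalizeParts c z u = secularSum c z := by
  rw [← sum_partSum c]
  exact Finset.sum_congr rfl fun k _ => by
    rw [div_eq_inv_mul]
    exact partSum_comp_mul (fun k => (1 + partSum c z k)⁻¹) z k

lemma mul_normalizeParts_add_le (hH : RespectsParts c H) (hz : 0 ≤ z) {u : V}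
    (h : ρ * z u ≤ 1 + (H.adjMatrix ℝ *ᵥ z) u) :
    ρ * normalizeParts c z u + (secularSum c z - 1) ≤
      ((multipartiteEmbed c H).adjMatrix ℝ *ᵥ normalizeParts c z) u := by
  rw [adjMatrix_multipartiteEmbed_mulVec hH, sum_normalizeParts]
  unfold normalizeParts
  rw [partSum_comp_mul (fun k => (1 + partSum c z k)⁻¹),
    adjMatrix_mulVec_comp_mul hH fun k => (1 + partSum c z k)⁻¹]
  have hpos : 0 < 1 + partSum c z (c u) := by linarith [partSum_nonneg (c := c) hz (c u)]
  linarith [mul_le_mul_of_nonneg_left h (inv_pos.mpr hpos).le, inv_mul_cancel₀ hpos.ne']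

lemma normalizeParts_pos (hz : 0 ≤ z) (hS : 0 < secularSum c z) : 0 < normalizeParts c z := by
  refine lt_of_le_of_ne (fun u => mul_nonneg (inv_nonneg.mpr ?_) (hz u)) fun h => ?_
  · linarith [partSum_nonneg (c := c) hz (c u)]
  · simp [← sum_normalizeParts, ← h] at hS

lemma le_spectralRad_of_one_le_secularSum (hH : RespectsParts c H) (hz : 0 ≤ z)
    (hρ : ρ • z ≤ 1 + H.adjMatrix ℝ *ᵥ z) (hS : 1 ≤ secularSum c z) :
    ρ ≤ spectralRad (multipartiteEmbed c H) :=
  le_of_smul_le_mulVec ((multipartiteEmbed c H).isHermitian_adjMatrix ℝ)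
    (spectralRad_mem_upperBounds_spectrum _)
    (normalizeParts_pos hz (zero_lt_one.trans_le hS)) fun u =>
      (le_add_of_nonneg_right (sub_nonneg.mpr hS)).trans (mul_normalizeParts_add_le hH hz (hρ u))

lemma lt_spectralRad_of_one_lt_secularSum (hH : RespectsParts c H) (hz : 0 ≤ z)
    (hρ : ρ • z ≤ 1 + H.adjMatrix ℝ *ᵥ z) (hS : 1 < secularSum c z) :
    ρ < spectralRad (multipartiteEmbed c H) :=
  lt_of_smul_strongLT_mulVec ((multipartiteEmbed c H).isHermitian_adjMatrix ℝ)
    (spectralRad_mem_upperBounds_spectrum _)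
    (normalizeParts_pos hz (zero_lt_one.trans hS)) fun u =>
      (lt_add_of_pos_right _ (sub_pos.mpr hS)).trans_le (mul_normalizeParts_add_le hH hz (hρ u))

/-- The Perron eigenvector `x` gives the walk series `z u = x u / (∑ x - ∑_{c v = c u} x v)`. -/
lemma exists_isWalkSeries_secularSum_eq_one [Nonempty V] (hH : RespectsParts c H)
    (hc : ∀ k, ∃ u, c u ≠ k) :
    ∃ z, IsWalkSeries H (spectralRad (multipartiteEmbed c H)) z ∧ secularSum c z = 1 := by
  set G := multipartiteEmbed c H
  obtain ⟨x, hx, hGx⟩ := exists_pos_eigenvector (G.isHermitian_adjMatrix ℝ)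
    (fun u v => by rw [adjMatrix_apply]; positivity) (isGreatest_spectralRad G)
  set S := ∑ u, x u
  have hgap (k : K) : 0 < S - partSum c x k :=
    sub_pos.mpr (partSum_lt_sum_of_eigenvector hH hc hx hGx k)
  set a : K → ℝ := fun k => (S - partSum c x k)⁻¹
  refine ⟨fun u => a (c u) * x u, ⟨fun u => ?_, funext fun u => ?_⟩, ?_⟩
  · exact mul_nonneg (inv_pos.mpr (hgap (c u))).le (hx.le u)
  · have heig : S - partSum c x (c u) + (H.adjMatrix ℝ *ᵥ x) u = spectralRad G * x u := by
      rw [← adjMatrix_multipartiteEmbed_mulVec hH]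
      exact congrFun hGx u
    rw [Pi.smul_apply, Pi.add_apply, Pi.one_apply, adjMatrix_mulVec_comp_mul hH, smul_eq_mul,
      mul_left_comm, ← heig, mul_add, inv_mul_cancel₀ (hgap (c u)).ne']
  · have hS : 0 < S := Fintype.sum_pos hx
    have hterm (k : K) : partSum c (fun u => a (c u) * x u) k /
        (1 + partSum c (fun u => a (c u) * x u) k) = partSum c x k / S := by
      rw [partSum_comp_mul]
      have hk := (hgap k).ne'
      simp only [a]
      field_simp
      rw [sub_add_cancel, mul_div_cancel_left₀ _ hS.ne']
    simp only [secularSum, hterm, ← Finset.sum_div, sum_partSum, S]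
    exact div_self hS.ne'

end SecularSum

section Inequalities

lemma add_div_one_add_add {b e : ℝ} (hb : 0 ≤ b) (he : 0 ≤ e) :
    (b + e) / (1 + (b + e)) = b / (1 + b) + e / ((1 + b) * (1 + b + e)) := by
  field_simp
  ring

lemma mul_inv_sub_le {D W ρ : ℝ} (hD : 1 ≤ D) (hWD : W ≤ D ^ 2) (hρ : 4 * D ^ 3 ≤ ρ) :
    W * (ρ - D)⁻¹ ≤ W * ρ⁻¹ + ρ⁻¹ / 3 := by
  have hD3 : D ≤ D ^ 3 := le_self_pow₀ hD three_ne_zero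
  have hρ0 : 0 < ρ := by linarith
  have hρD : 0 < ρ - D := by linarith
  have hsplit : (ρ - D)⁻¹ = ρ⁻¹ + ρ⁻¹ * (D * (ρ - D)⁻¹) := by
    field_simp
    ring
  have hthird : W * (D * (ρ - D)⁻¹) ≤ 1 / 3 := by
    rw [← mul_assoc, ← div_eq_mul_inv, div_le_iff₀ hρD]
    linarith [mul_le_mul_of_nonneg_right hWD (zero_le_one.trans hD)]
  rw [hsplit]
  linarith [mul_le_mul_of_nonneg_left hthird (inv_pos.mpr hρ0).le]

lemma mul_one_add_lt_of_add_one_le {D W W' ρ : ℝ} (hD : 1 ≤ D) (hW : 0 ≤ W)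
    (hWW' : W + 1 ≤ W') (hW' : W' ≤ D ^ 2) (hρ : 4 * D ^ 3 ≤ ρ) :
    (D + W * (ρ - D)⁻¹) * (1 + (ρ⁻¹) ^ 2 * (D + W' * ρ⁻¹)) < D + W' * ρ⁻¹ := by
  have hρ0 : 0 < ρ := by linarith [one_le_pow₀ hD (n := 3)]
  have hWD : W * (ρ - D)⁻¹ ≤ W * ρ⁻¹ + ρ⁻¹ / 3 := mul_inv_sub_le hD (by linarith) hρ
  set s := ρ⁻¹
  have hs : 0 < s := inv_pos.mpr hρ0
  have hDs : D ^ 3 * s ≤ 1 / 4 := by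
    rw [← div_eq_mul_inv, div_le_iff₀ hρ0]
    linarith
  have hgap : D + W * (ρ - D)⁻¹ ≤ D + W' * s - 2 / 3 * s := by
    linarith [mul_le_mul_of_nonneg_right hWW' hs.le]
  have hDs2 : D ^ 2 * s ≤ 1 / 4 :=
    (mul_le_mul_of_nonneg_right (pow_le_pow_right₀ hD (by norm_num)) hs.le).trans hDs
  have hB : D + W' * s ≤ 5 / 4 * D := by
    linarith [mul_le_mul_of_nonneg_right hW' hs.le]
  have hB0 : 0 ≤ D + W' * s :=
    add_nonneg (by linarith) (mul_nonneg (by linarith) hs.le)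
  have hquad : s ^ 2 * (D + W' * s) ^ 2 ≤ 25 / 64 * s := calc
    _ ≤ s ^ 2 * (5 / 4 * D) ^ 2 := by gcongr
    _ = 25 / 16 * s * (D ^ 2 * s) := by ring
    _ ≤ 25 / 16 * s * (1 / 4) := by gcongr
    _ = 25 / 64 * s := by ring
  calc
    _ ≤ (D + W' * s - 2 / 3 * s) * (1 + s ^ 2 * (D + W' * s)) := by gcongr
    _ ≤ D + W' * s - 2 / 3 * s + s ^ 2 * (D + W' * s) ^ 2 := by
      linarith [mul_nonneg (mul_nonneg hs.le (sq_nonneg s)) hB0]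
    _ < D + W' * s := by linarith

lemma div_sq_lt_div_mul_add {b e E : ℝ} (hb : 0 ≤ b) (he : 0 ≤ e) (hE : 0 ≤ E)
    (h : E * (1 + e) < e) : E / (1 + b) ^ 2 < e / ((1 + b) * (1 + b + e)) := by
  have hEe : E ≤ e := by nlinarith
  have hcross : E * (1 + b + e) < e * (1 + b) := by
    linarith [mul_le_mul_of_nonneg_right hEe hb]
  rw [div_lt_div_iff₀ (by positivity) (by positivity)]
  linarith [mul_lt_mul_of_pos_left hcross (by positivity : 0 < 1 + b)]

end Inequalities

section Excess

variable {V K : Type*} [Fintype V] {c : V → K} {H : SimpleGraph V} {z : V → ℝ}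
  {ρ s : ℝ} {i : K}

lemma partSum_eq_add_partSum_sub (c : V → K) (z : V → ℝ) (s : ℝ) (k : K) :
    partSum c z k = partCard c k * s + partSum c (fun u => z u - s) k := by
  rw [← partSum_const, partSum, partSum, partSum, ← Finset.sum_add_distrib]
  simp only [add_sub_cancel]

lemma partSum_sub_eq_zero (hz : ∀ u, c u ≠ i → z u = s) {k : K} (hk : k ≠ i) :
    partSum c (fun u => z u - s) k = 0 :=
  Finset.sum_eq_zero fun u hu => sub_eq_zero.mpr <| hz u <| by
    rwa [(Finset.mem_filter.mp hu).2]

variable [Fintype K]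

lemma secularSum_eq_of_eq_off_part (hs : 0 ≤ s) (hsz : ∀ u, s ≤ z u)
    (hz : ∀ u, c u ≠ i → z u = s) :
    secularSum c z = secularSum c (fun _ => s) + (∑ u, (z u - s)) /
      ((1 + partCard c i * s) * (1 + partCard c i * s + ∑ u, (z u - s))) := by
  have hexcess : 0 ≤ ∑ u, (z u - s) := Finset.sum_nonneg fun u _ => sub_nonneg.mpr (hsz u)
  have hsum : partSum c (fun u => z u - s) i = ∑ u, (z u - s) := by
    rw [← sum_partSum c fun u => z u - s]
    exact (Fintype.sum_eq_single i fun k hk => partSum_sub_eq_zero hz hk).symm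
  have hterm (k : K) : partSum c z k / (1 + partSum c z k) =
      partSum c (fun _ => s) k / (1 + partSum c (fun _ => s) k) + if k = i then
        (∑ u, (z u - s)) / ((1 + partCard c i * s) * (1 + partCard c i * s + ∑ u, (z u - s)))
      else 0 := by
    rw [partSum_eq_add_partSum_sub c z s, partSum_const]
    split_ifs with hk
    · rw [hk, hsum, add_div_one_add_add (by positivity) hexcess]
    · rw [partSum_sub_eq_zero hz hk, add_zero, add_zero]
  simp only [secularSum, hterm, Finset.sum_add_distrib, Finset.sum_ite_eq', Finset.mem_univ,
    if_true]

lemma secularSum_le_of_forall_partCard_le (hs : 0 ≤ s) (hsz : ∀ u, s ≤ z u)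
    (hi : ∀ k, partCard c i ≤ partCard c k) :
    secularSum c z ≤
      secularSum c (fun _ => s) + (∑ u, (z u - s)) / (1 + partCard c i * s) ^ 2 := by
  rw [← sum_partSum c fun u => z u - s, Finset.sum_div, secularSum, secularSum,
    ← Finset.sum_add_distrib]
  refine Finset.sum_le_sum fun k _ => ?_
  have hexcess : 0 ≤ partSum c (fun u => z u - s) k :=
    partSum_nonneg (fun u => sub_nonneg.mpr (hsz u)) k
  have hik : (partCard c i : ℝ) * s ≤ partCard c k * s :=
    mul_le_mul_of_nonneg_right (mod_cast hi k) hs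
  rw [partSum_eq_add_partSum_sub c z s, partSum_const,
    add_div_one_add_add (by positivity) hexcess]
  have hsq : (1 + partCard c i * s) ^ 2 ≤
      (1 + partCard c k * s) * (1 + partCard c k * s + partSum c (fun u => z u - s) k) := by
    rw [sq]
    exact mul_le_mul (by linarith) (by linarith) (by positivity) (by positivity)
  gcongr

lemma IsWalkSeries.secularSum_eq [Nonempty V] (h : IsWalkSeries H ρ z)
    (hH : ConfinedTo c i H) :
    secularSum c z = secularSum c (fun _ => ρ⁻¹) + (∑ u, (z u - ρ⁻¹)) /
      ((1 + partCard c i * ρ⁻¹) * (1 + partCard c i * ρ⁻¹ + ∑ u, (z u - ρ⁻¹))) :=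
  secularSum_eq_of_eq_off_part (inv_pos.mpr h.pos).le h.inv_le_apply fun _ hu =>
    h.apply_of_isolated fun _ hadj => hu (hH hadj)

end Excess

section Comparison

variable {V K : Type*} [Fintype V] [Finite K] {c : V → K} {H H' : SimpleGraph V} {i j : K}

lemma sum_comp_symm_sub (φ : H ≃g H') (f : V → ℝ) (s : ℝ) :
    ∑ u, ((f ∘ φ.symm) u - s) = ∑ u, (f u - s) :=
  Equiv.sum_comp φ.symm.toEquiv fun u => f u - s

theorem spectralRad_multipartiteEmbed_le_of_iso [Nonempty V] (hc : ∀ k, ∃ u, c u ≠ k)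
    (hH : ConfinedTo c j H) (hH' : ConfinedTo c i H') (φ : H ≃g H')
    (hij : partCard c i ≤ partCard c j) :
    spectralRad (multipartiteEmbed c H) ≤ spectralRad (multipartiteEmbed c H') := by
  have := Fintype.ofFinite K
  obtain ⟨z, hz, hS⟩ := exists_isWalkSeries_secularSum_eq_one hH.respectsParts hc
  have hz' := hz.comp_symm φ
  refine le_spectralRad_of_one_le_secularSum hH'.respectsParts hz'.nonneg hz'.smul_eq.le ?_
  have hρ := hz.pos
  have hexcess := hz.sum_sub_inv_nonneg
  rw [← hS, hz.secularSum_eq hH, hz'.secularSum_eq hH', sum_comp_symm_sub]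
  gcongr

theorem spectralRad_multipartiteEmbed_lt_of_iso [Nonempty V] (hc : ∀ k, ∃ u, c u ≠ k)
    (hH : ConfinedTo c j H) (hH' : ConfinedTo c i H') (φ : H ≃g H')
    (hij : partCard c i < partCard c j) {u v : V} (huv : H.Adj u v) :
    spectralRad (multipartiteEmbed c H) < spectralRad (multipartiteEmbed c H') := by
  have := Fintype.ofFinite K
  obtain ⟨z, hz, hS⟩ := exists_isWalkSeries_secularSum_eq_one hH.respectsParts hc
  have hz' := hz.comp_symm φ
  refine lt_spectralRad_of_one_lt_secularSum hH'.respectsParts hz'.nonneg hz'.smul_eq.le ?_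
  have hρ := hz.pos
  have hexcess := hz.sum_sub_inv_pos huv
  rw [← hS, hz.secularSum_eq hH, hz'.secularSum_eq hH', sum_comp_symm_sub]
  gcongr

lemma IsWalkSeries.sum_sub_inv_mul_lt [Nonempty V] {z : V → ℝ} {ρ : ℝ}
    (h : IsWalkSeries H ρ z) (hW1 : totalWalks H 1 = totalWalks H' 1)
    (hW2 : totalWalks H 2 < totalWalks H' 2) (hlarge : 4 * (totalWalks H 1 : ℝ) ^ 3 ≤ ρ) :
    (∑ u, (z u - ρ⁻¹)) * (1 + ∑ u, (truncatedWalkSeries H' ρ 3 u - ρ⁻¹)) <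
      ∑ u, (truncatedWalkSeries H' ρ 3 u - ρ⁻¹) := by
  have hρ := h.pos
  have hsq : totalWalks H' 2 ≤ totalWalks H 1 ^ 2 := by
    rw [hW1, sq]
    exact totalWalks_succ_le H' 1
  have hD : (1 : ℝ) ≤ totalWalks H 1 := by
    have hpos : totalWalks H 1 ^ 2 ≠ 0 := (Nat.zero_lt_of_lt (hW2.trans_le hsq)).ne'
    exact_mod_cast Nat.one_le_iff_ne_zero.mpr (pow_ne_zero_iff two_ne_zero |>.mp hpos)
  have hDρ : (totalWalks H 1 : ℝ) < ρ := by
    linarith [le_self_pow₀ hD three_ne_zero]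
  have hexcess : ∑ u, (truncatedWalkSeries H' ρ 3 u - ρ⁻¹) =
      (ρ⁻¹) ^ 2 * (totalWalks H 1 + totalWalks H' 2 * ρ⁻¹) := by
    rw [sum_truncatedWalkSeries_sub_inv, Finset.sum_range_succ, Finset.sum_range_one, hW1]
    ring
  rw [hexcess]
  refine (mul_le_mul_of_nonneg_right
    (h.sum_sub_inv_le (degree_le_totalWalks_one H) hDρ) (by positivity)).trans_lt ?_
  rw [mul_assoc]
  refine mul_lt_mul_of_pos_left (mul_one_add_lt_of_add_one_le hD (Nat.cast_nonneg _) ?_ ?_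
    hlarge) (by positivity)
  · exact_mod_cast hW2
  · exact_mod_cast hsq

theorem spectralRad_multipartiteEmbed_lt_of_totalWalks_two_lt [Nonempty V]
    (hc : ∀ k, ∃ u, c u ≠ k) (hH : RespectsParts c H) (hH' : ConfinedTo c i H')
    (hi : ∀ k, partCard c i ≤ partCard c k) (hW1 : totalWalks H 1 = totalWalks H' 1)
    (hW2 : totalWalks H 2 < totalWalks H' 2)
    (hlarge : 4 * (totalWalks H 1 : ℝ) ^ 3 ≤ spectralRad (multipartiteEmbed c H)) :
    spectralRad (multipartiteEmbed c H) < spectralRad (multipartiteEmbed c H') := by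
  have := Fintype.ofFinite K
  obtain ⟨z, hz, hS⟩ := exists_isWalkSeries_secularSum_eq_one hH hc
  set ρ := spectralRad (multipartiteEmbed c H)
  have hρ : 0 < ρ := hz.pos
  set y := truncatedWalkSeries H' ρ 3
  have hy : ∀ u, ρ⁻¹ ≤ y u := inv_le_truncatedWalkSeries_succ hρ.le 2
  refine lt_spectralRad_of_one_lt_secularSum hH'.respectsParts
    (truncatedWalkSeries_nonneg hρ.le 3) (smul_truncatedWalkSeries_le hρ 2) ?_
  calc
    1 = secularSum c z := hS.symm
    _ ≤ secularSum c (fun _ => ρ⁻¹) + (∑ u, (z u - ρ⁻¹)) / (1 + partCard c i * ρ⁻¹) ^ 2 :=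
      secularSum_le_of_forall_partCard_le (inv_pos.mpr hρ).le hz.inv_le_apply hi
    _ < secularSum c (fun _ => ρ⁻¹) + (∑ u, (y u - ρ⁻¹)) /
        ((1 + partCard c i * ρ⁻¹) * (1 + partCard c i * ρ⁻¹ + ∑ u, (y u - ρ⁻¹))) :=
      add_lt_add_right (div_sq_lt_div_mul_add (by positivity)
        (Finset.sum_nonneg fun u _ => sub_nonneg.mpr (hy u)) hz.sum_sub_inv_nonneg
        (hz.sum_sub_inv_mul_lt hW1 hW2 hlarge)) _
    _ = secularSum c y :=
      (secularSum_eq_of_eq_off_part (inv_pos.mpr hρ).le hy fun u hu =>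
          truncatedWalkSeries_succ_of_isolated ρ 2 fun v huv => hu (hH' huv)).symm

end Comparison

section TuranFamily

variable {n r t : ℕ} {G : SimpleGraph (Fin n)} {i j : Fin r}
  {𝒢 : Set (SimpleGraph (Fin n))}

lemma totalWalks_emb_one (hG : G ∈ TuranFam n r t) : totalWalks (emb n r G) 1 = 2 * t := by
  rw [totalWalks_one, hG.2.2]

lemma EXiter_one_emb_image (h𝒢 : 𝒢 ⊆ TuranFam n r t) :
    EXiter 1 (emb n r '' 𝒢) = emb n r '' 𝒢 := by
  refine Set.sep_eq_self_iff_mem_true.mpr ?_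
  rintro _ ⟨G, hG, rfl⟩ _ ⟨G', hG', rfl⟩
  exact ((totalWalks_emb_one (h𝒢 hG')).trans (totalWalks_emb_one (h𝒢 hG)).symm).le

lemma emb_mem_EXiter_two_iff (h𝒢 : 𝒢 ⊆ TuranFam n r t) (hG : G ∈ 𝒢) :
    emb n r G ∈ EXiter 2 (emb n r '' 𝒢) ↔
      ∀ G' ∈ 𝒢, totalWalks (emb n r G') 2 ≤ totalWalks (emb n r G) 2 := by
  rw [EXiter, EXiter_one_emb_image h𝒢]
  exact ⟨fun h G' hG' => h.2 _ ⟨G', hG', rfl⟩,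
    fun h => ⟨⟨G, hG, rfl⟩, Set.forall_mem_image.mpr h⟩⟩

lemma SPEXset_nonempty (h𝒢 : 𝒢.Nonempty) : (SPEXset 𝒢).Nonempty :=
  Set.exists_max_image 𝒢 spectralRad (Set.toFinite _) h𝒢

lemma IsNormal.exists_copy (hnorm : IsNormal n r 𝒢) (i : Fin r) (hG : G ∈ classSet n r 𝒢 j) :
    ∃ G' ∈ classSet n r 𝒢 i, Nonempty (emb n r G ≃g emb n r G') := by
  by_cases hji : j = i
  · exact ⟨G, hji ▸ hG, ⟨Iso.refl⟩⟩
  · exact hnorm j i hji G hG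

lemma partSize_eq [NeZero r] (n : ℕ) (i : Fin r) :
    partSize n r i = n / r + if (i : ℕ) < n % r then 1 else 0 := by
  have hcount := Nat.count_modEq_card n (Nat.pos_of_neZero r) (i : ℕ)
  rw [Nat.mod_eq_of_lt i.isLt] at hcount
  rw [← hcount, Nat.count_eq_card_filter_range, partSize, Finset.card_filter,
    Finset.card_filter, ← Fin.sum_univ_eq_sum_range fun v => if v ≡ i [MOD r] then 1 else 0]
  simp only [Nat.ModEq, Nat.mod_eq_of_lt i.isLt]

lemma div_le_partSize [NeZero r] (n : ℕ) (i : Fin r) : n / r ≤ partSize n r i := by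
  rw [partSize_eq]
  exact Nat.le_add_right _ _

lemma exists_partSize_eq_div (n r : ℕ) [NeZero r] : ∃ i : Fin r, partSize n r i = n / r := by
  have hr := Nat.pos_of_neZero r
  refine ⟨⟨r - 1, Nat.sub_one_lt_of_lt hr⟩, ?_⟩
  rw [partSize_eq, if_neg (Nat.not_lt.mpr (Nat.le_sub_one_of_lt (Nat.mod_lt n hr))), add_zero]

/-- The index of the part of `T(n,r)` containing `v`, that is, the residue of `v` modulo `r`. -/
def turanPart (n r : ℕ) [NeZero r] (v : Fin n) : Fin r :=
  Fin.ofNat r v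

variable [NeZero r]

lemma turanGraph_eq_comap : turanGraph n r = (⊤ : SimpleGraph (Fin r)).comap (turanPart n r) := by
  ext u v
  simp [turanGraph, turanPart, Fin.ext_iff]

lemma multipartiteEmbed_turanPart_emb (hG : turanGraph n r ≤ G) :
    multipartiteEmbed (turanPart n r) (emb n r G) = G := by
  rw [multipartiteEmbed, ← turanGraph_eq_comap, emb, sup_sdiff_cancel_right hG]

lemma respectsParts_emb (hG : G ∈ TuranFam n r t) :
    RespectsParts (turanPart n r) (emb n r G) :=
  fun u v huv => Fin.ext (hG.2.1 u v huv)

lemma confinedTo_emb (hG : inPart n r i G) : ConfinedTo (turanPart n r) i (emb n r G) :=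
  fun u v huv => Fin.ext (hG u v huv)

lemma partCard_turanPart (n : ℕ) (i : Fin r) :
    partCard (turanPart n r) i = partSize n r i := by
  simp only [partCard, partSize, turanPart, Fin.ext_iff, Fin.val_ofNat]

lemma div_le_spectralRad [NeZero n] [Nontrivial (Fin r)] (hG : G ∈ TuranFam n r t) :
    ((n / r : ℕ) : ℝ) ≤ spectralRad G := by
  rw [← multipartiteEmbed_turanPart_emb hG.1]
  exact le_spectralRad_multipartiteEmbed (respectsParts_emb hG) fun k => by
    rw [partCard_turanPart]
    exact div_le_partSize n k

end TuranFamily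

section NormalFamily

variable {n r t : ℕ} [n.AtLeastTwo] [r.AtLeastTwo] {G G₁ : SimpleGraph (Fin n)} {i j : Fin r}
  {𝒢 : Set (SimpleGraph (Fin n))}

lemma exists_turanPart_ne (k : Fin r) : ∃ u, turanPart n r u ≠ k := by
  have hn := Nat.AtLeastTwo.prop (n := n)
  have hr := Nat.AtLeastTwo.prop (n := r)
  by_contra! h
  have h01 := (h ⟨0, by lia⟩).trans (h ⟨1, by lia⟩).symm
  simp [turanPart, Fin.ext_iff, Nat.mod_eq_of_lt hr] at h01

lemma IsNormal.exists_spectralRad_le (hnorm : IsNormal n r 𝒢) (h𝒢 : 𝒢 ⊆ TuranFam n r t)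
    (hG : G ∈ classSet n r 𝒢 j) (hij : partSize n r i ≤ partSize n r j) :
    ∃ G' ∈ classSet n r 𝒢 i, spectralRad G ≤ spectralRad G' := by
  obtain ⟨G', hG', ⟨φ⟩⟩ := hnorm.exists_copy i hG
  refine ⟨G', hG', ?_⟩
  rw [← multipartiteEmbed_turanPart_emb (h𝒢 hG.1).1,
    ← multipartiteEmbed_turanPart_emb (h𝒢 hG'.1).1]
  refine spectralRad_multipartiteEmbed_le_of_iso exists_turanPart_ne (confinedTo_emb hG.2)
    (confinedTo_emb hG'.2) φ ?_
  rwa [partCard_turanPart, partCard_turanPart]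

lemma IsNormal.exists_spectralRad_lt (hnorm : IsNormal n r 𝒢) (h𝒢 : 𝒢 ⊆ TuranFam n r t)
    (ht : 1 ≤ t) (hG : G ∈ classSet n r 𝒢 j) (hij : partSize n r i < partSize n r j) :
    ∃ G' ∈ classSet n r 𝒢 i, spectralRad G < spectralRad G' := by
  obtain ⟨G', hG', ⟨φ⟩⟩ := hnorm.exists_copy i hG
  refine ⟨G', hG', ?_⟩
  obtain ⟨⟨u, v⟩, huv⟩ := Finset.card_pos.mp (ht.trans_eq (h𝒢 hG.1).2.2.symm)
  rw [← multipartiteEmbed_turanPart_emb (h𝒢 hG.1).1,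
    ← multipartiteEmbed_turanPart_emb (h𝒢 hG'.1).1]
  refine spectralRad_multipartiteEmbed_lt_of_iso exists_turanPart_ne (confinedTo_emb hG.2)
    (confinedTo_emb hG'.2) φ ?_ (mem_edgeFinset.mp huv)
  rwa [partCard_turanPart, partCard_turanPart]

lemma IsNormal.exists_spectralRad_lt_of_totalWalks_two_lt (hnorm : IsNormal n r 𝒢)
    (h𝒢 : 𝒢 ⊆ TuranFam n r t) (hn : 32 * t ^ 3 ≤ n / r) (hG : G ∈ 𝒢)
    (hG₁ : G₁ ∈ classSet n r 𝒢 j)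
    (hlt : totalWalks (emb n r G) 2 < totalWalks (emb n r G₁) 2) :
    ∃ G' ∈ 𝒢, spectralRad G < spectralRad G' := by
  obtain ⟨i, hi⟩ := exists_partSize_eq_div n r
  obtain ⟨G', hG', ⟨φ⟩⟩ := hnorm.exists_copy i hG₁
  refine ⟨G', hG'.1, ?_⟩
  have hG_eq := multipartiteEmbed_turanPart_emb (h𝒢 hG).1
  have hlarge : 4 * (totalWalks (emb n r G) 1 : ℝ) ^ 3 ≤
      spectralRad (multipartiteEmbed (turanPart n r) (emb n r G)) := by
    rw [hG_eq, totalWalks_emb_one (h𝒢 hG)]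
    exact le_trans (mod_cast (by lia : 4 * (2 * t) ^ 3 ≤ n / r)) (div_le_spectralRad (h𝒢 hG))
  rw [← hG_eq, ← multipartiteEmbed_turanPart_emb (h𝒢 hG'.1).1]
  refine spectralRad_multipartiteEmbed_lt_of_totalWalks_two_lt exists_turanPart_ne
    (respectsParts_emb (h𝒢 hG)) (confinedTo_emb hG'.2) (fun k => ?_) ?_ ?_ hlarge
  · rw [partCard_turanPart, partCard_turanPart, hi]
    exact div_le_partSize n k
  · rw [totalWalks_emb_one (h𝒢 hG), totalWalks_emb_one (h𝒢 hG'.1)]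
  · rwa [← totalWalks_congr φ]

lemma emb_mem_EXiter_two_of_mem_SPEXset (hnorm : IsNormal n r 𝒢) (h𝒢 : 𝒢 ⊆ TuranFam n r t)
    (hn : 32 * t ^ 3 ≤ n / r)
    (hEX : {G ∈ 𝒢 | emb n r G ∈ EXiter 2 (emb n r '' 𝒢)} ⊆ ⋃ i : Fin r, classSet n r 𝒢 i)
    (hG : G ∈ SPEXset 𝒢) : emb n r G ∈ EXiter 2 (emb n r '' 𝒢) := by
  obtain ⟨G₁, hG₁, hmax⟩ := Set.exists_max_image 𝒢 (fun G => totalWalks (emb n r G) 2)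
    (Set.toFinite _) ⟨G, hG.1⟩
  obtain ⟨j, hG₁j⟩ := Set.mem_iUnion.mp (hEX ⟨hG₁, (emb_mem_EXiter_two_iff h𝒢 hG₁).mpr hmax⟩)
  refine (emb_mem_EXiter_two_iff h𝒢 hG.1).mpr fun G₂ hG₂ => ?_
  by_contra! hlt
  obtain ⟨G', hG', hGG'⟩ := hnorm.exists_spectralRad_lt_of_totalWalks_two_lt h𝒢 hn hG.1 hG₁j
    (hlt.trans_le (hmax G₂ hG₂))
  exact hGG'.not_ge (hG.2 G' hG')

lemma partSize_eq_div_of_mem_SPEXset (hnorm : IsNormal n r 𝒢) (h𝒢 : 𝒢 ⊆ TuranFam n r t)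
    (ht : 1 ≤ t) (hG : G ∈ SPEXset 𝒢) (hGj : inPart n r j G) : partSize n r j = n / r := by
  obtain ⟨i, hi⟩ := exists_partSize_eq_div n r
  by_contra hj
  have hij : partSize n r i < partSize n r j :=
    hi.trans_lt (lt_of_le_of_ne (div_le_partSize n j) (Ne.symm hj))
  obtain ⟨G', hG', hGG'⟩ := hnorm.exists_spectralRad_lt h𝒢 ht ⟨hG.1, hGj⟩ hij
  exact hGG'.not_ge (hG.2 G' hG'.1)

theorem SPEXset_subset_iUnion_classSet (hnorm : IsNormal n r 𝒢) (h𝒢 : 𝒢 ⊆ TuranFam n r t)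
    (ht : 1 ≤ t) (hn : 32 * t ^ 3 ≤ n / r)
    (hEX : {G ∈ 𝒢 | emb n r G ∈ EXiter 2 (emb n r '' 𝒢)} ⊆ ⋃ i : Fin r, classSet n r 𝒢 i) :
    SPEXset 𝒢 ⊆ ⋃ i ∈ {i : Fin r | partSize n r i = n / r}, SPEXset (classSet n r 𝒢 i) := by
  intro G hG
  obtain ⟨j, hGj⟩ := Set.mem_iUnion.mp
    (hEX ⟨hG.1, emb_mem_EXiter_two_of_mem_SPEXset hnorm h𝒢 hn hEX hG⟩)
  exact Set.mem_biUnion (partSize_eq_div_of_mem_SPEXset hnorm h𝒢 ht hG hGj.2)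
    ⟨hGj, fun G' hG' => hG.2 G' hG'.1⟩

end NormalFamily

/-- (Theorem 1.4 (i).) For `t ≥ 1`, `r ≥ 2` and sufficiently large `n`:
if `𝒢` is a normal subset of `𝒯_{n,r,t}` with
`{G ∈ 𝒢 : H^G ∈ EX²(ℋ^𝒢)} ⊆ ∪_i 𝒢_i`, then
`SPEX(𝒢) = ∪_{i : n_i = ⌊n/r⌋} SPEX(𝒢_i)`. -/
theorem stmt_12 (t r : ℕ) (ht : 1 ≤ t) (hr : 2 ≤ r) :
    ∃ N : ℕ, ∀ n : ℕ, N ≤ n →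
      ∀ 𝒢 : Set (SimpleGraph (Fin n)), 𝒢 ⊆ TuranFam n r t →
        IsNormal n r 𝒢 →
        {G ∈ 𝒢 | emb n r G ∈ EXiter 2 (emb n r '' 𝒢)} ⊆ ⋃ i : Fin r, classSet n r 𝒢 i →
        SPEXset 𝒢 = ⋃ i ∈ {i : Fin r | partSize n r i = n / r}, SPEXset (classSet n r 𝒢 i) := by
  have : r.AtLeastTwo := ⟨hr⟩
  refine ⟨r * (32 * t ^ 3), fun n hn 𝒢 h𝒢 hnorm hEX => ?_⟩
  have hdiv : 32 * t ^ 3 ≤ n / r :=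
    (Nat.le_div_iff_mul_le (Nat.pos_of_neZero r)).mpr (by rwa [mul_comm])
  have : n.AtLeastTwo :=
    ⟨hr.trans ((Nat.le_mul_of_pos_right r (by positivity)).trans hn)⟩
  have hsub := SPEXset_subset_iUnion_classSet hnorm h𝒢 ht hdiv hEX
  refine hsub.antisymm fun G hG => ?_
  obtain ⟨i, hi, hGi, hmax⟩ := Set.mem_iUnion₂.mp hG
  obtain ⟨G₁, hG₁⟩ := SPEXset_nonempty ⟨G, hGi.1⟩
  obtain ⟨j, hj, hG₁j, -⟩ := Set.mem_iUnion₂.mp (hsub hG₁)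
  obtain ⟨G₂, hG₂, hle⟩ := hnorm.exists_spectralRad_le h𝒢 hG₁j (hi.trans hj.symm).le
  exact ⟨hGi.1, fun G' hG' => (hG₁.2 G' hG').trans (hle.trans (hmax G₂ hG₂))⟩
end

section
/- For an integer $r \ge 2$, let $K_{n_1, n_2, \ldots, n_r}$ be the complete $r$-partite graph of order $n$ with parts $V_1, V_2, \ldots, V_r$, where $n_i = |V_i| \ge 1$. For each $1 \le i \le r$, let $H_i$ be a graph with vertex set $V(H_i) \subseteq V_i$ and maximum degree at most $\Delta$. Let $G$ be the graph obtained from $K_{n_1, \ldots, n_r}$ by adding the edges of $H_i$ inside $V_i$ for all $i$, let $\rho = \rho(G) > \Delta$, and let $\mathbf{x} = (x_v)_{v \in V(G)}$ be the Perron vector of $G$ normalized so that $\sum_{v \in V(G)} x_v = 1$. Then for each $1 \le s \le r$, $\sum_{u \in V_s} x_u = 1 - \frac{1}{1 + \frac{n_s}{\rho} + \sum_{i=1}^{\infty} \frac{W^{i}(H_s)}{\rho^{i+1}}}$. -/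
open Finset Matrix SimpleGraph
open scoped Classical

/-!
Let `A` be one of the parts. The walk generating function `z u = ∑ l, w^l(u) / ρ^(l+1)` of `H`
solves `ρ z = 1 + A_H z`, where `A_H` is the adjacency matrix of `H`. On `A` the eigenvector
equation of `G` reads `ρ x = c + A_H x` with `c = ∑ v ∉ A, x v`, because every vertex of `A` sees
all of the other parts. Pairing each equation with the other solution over `A` and using that
`A_H` is symmetric gives `c * ∑ u ∈ A, z u = ∑ u ∈ A, x u`. Since `c = 1 - ∑ u ∈ A, x u`, it
follows that `c * (1 + ∑ u ∈ A, z u) = 1`.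
-/

section Neighbors

variable {V R : Type*} [Fintype V] {G H : SimpleGraph V} {A : Finset V}

lemma sum_sum_neighborFinset_comm [AddCommMonoid R] (hA : ∀ u ∈ A, H.neighborFinset u ⊆ A)
    (f : V → V → R) :
    ∑ u ∈ A, ∑ v ∈ H.neighborFinset u, f u v = ∑ v ∈ A, ∑ u ∈ H.neighborFinset v, f u v := by
  refine Finset.sum_comm' fun u v => ?_
  simp only [mem_neighborFinset, H.adj_comm v u]
  constructor
  · rintro ⟨hu, huv⟩
    exact ⟨huv, hA u hu (by simpa using huv)⟩
  · rintro ⟨huv, hv⟩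
    exact ⟨hA v hv (by simpa using huv.symm), huv⟩

lemma mul_sum_eq_mul_sum_of_mul_eq_add_sum_neighborFinset [CommRing R]
    (hA : ∀ u ∈ A, H.neighborFinset u ⊆ A) {ρ c d : R} {x z : V → R}
    (hx : ∀ u ∈ A, ρ * x u = c + ∑ v ∈ H.neighborFinset u, x v)
    (hz : ∀ u ∈ A, ρ * z u = d + ∑ v ∈ H.neighborFinset u, z v) :
    c * ∑ u ∈ A, z u = d * ∑ u ∈ A, x u := by
  have hsymm : ∑ u ∈ A, ∑ v ∈ H.neighborFinset u, x v * z u =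
      ∑ u ∈ A, ∑ v ∈ H.neighborFinset u, x u * z v :=
    sum_sum_neighborFinset_comm hA fun u v => x v * z u
  have hxz : ∑ u ∈ A, ρ * x u * z u =
      c * ∑ u ∈ A, z u + ∑ u ∈ A, ∑ v ∈ H.neighborFinset u, x v * z u := by
    rw [mul_sum, ← sum_add_distrib]
    exact sum_congr rfl fun u hu => by rw [hx u hu, add_mul, sum_mul]
  have hzx : ∑ u ∈ A, ρ * x u * z u =
      d * ∑ u ∈ A, x u + ∑ u ∈ A, ∑ v ∈ H.neighborFinset u, x u * z v := by
    rw [mul_sum, ← sum_add_distrib]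
    exact sum_congr rfl fun u hu => by
      rw [mul_right_comm, hz u hu, add_mul, mul_comm (∑ v ∈ _, z v), mul_sum]
  linear_combination hzx - hxz - hsymm

lemma adjMatrix_mulVec_apply_eq_sum_compl_add [NonAssocSemiring R] {u : V}
    (hA : H.neighborFinset u ⊆ A) (hG : ∀ v, G.Adj u v ↔ v ∉ A ∨ H.Adj u v) (x : V → R) :
    (G.adjMatrix R *ᵥ x) u = ∑ v ∈ Aᶜ, x v + ∑ v ∈ H.neighborFinset u, x v := by
  have hneighbors : G.neighborFinset u = Aᶜ ∪ H.neighborFinset u := by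
    ext v
    simp only [mem_neighborFinset, mem_union, mem_compl, hG]
  rw [adjMatrix_mulVec_apply, hneighbors,
    sum_union (disjoint_compl_left.mono_right hA)]

end Neighbors

section Walks

variable {V : Type*} [Fintype V] {H : SimpleGraph V}

lemma walkCount_succ (l : ℕ) (u : V) :
    walkCount H (l + 1) u = ∑ v ∈ H.neighborFinset u, walkCount H l v := by
  rw [walkCount, neighborFinset_eq_filter]

lemma walkCount_le_pow {A : Finset V} {Δ : ℕ} (hA : ∀ u ∈ A, H.neighborFinset u ⊆ A)
    (hΔ : ∀ u ∈ A, H.degree u ≤ Δ) (l : ℕ) {u : V} (hu : u ∈ A) : walkCount H l u ≤ Δ ^ l := by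
  induction l generalizing u with
  | zero => simp [walkCount]
  | succ l ih =>
    calc walkCount H (l + 1) u
        = ∑ v ∈ H.neighborFinset u, walkCount H l v := walkCount_succ l u
      _ ≤ H.degree u * Δ ^ l := sum_le_card_nsmul _ _ _ fun v hv => ih (hA u hu hv)
      _ ≤ Δ * Δ ^ l := Nat.mul_le_mul_right _ (hΔ u hu)
      _ = Δ ^ (l + 1) := (pow_succ' Δ l).symm

lemma summable_walkCount_div_pow {A : Finset V} {Δ : ℕ} {ρ : ℝ}
    (hA : ∀ u ∈ A, H.neighborFinset u ⊆ A) (hΔ : ∀ u ∈ A, H.degree u ≤ Δ) (hρ : Δ < |ρ|)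
    {u : V} (hu : u ∈ A) : Summable fun l => (walkCount H l u : ℝ) / ρ ^ (l + 1) := by
  have hρ0 : 0 < |ρ| := (Nat.cast_nonneg Δ).trans_lt hρ
  have hgeom : Summable fun l => |ρ|⁻¹ * (Δ / |ρ|) ^ l :=
    (summable_geometric_of_lt_one (by positivity) ((div_lt_one hρ0).2 hρ)).mul_left _
  refine hgeom.of_norm_bounded fun l => ?_
  calc ‖(walkCount H l u : ℝ) / ρ ^ (l + 1)‖
      = walkCount H l u / |ρ| ^ (l + 1) := by simp
    _ ≤ Δ ^ l / |ρ| ^ (l + 1) := by gcongr; exact_mod_cast walkCount_le_pow hA hΔ l hu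
    _ = |ρ|⁻¹ * (Δ / |ρ|) ^ l := by rw [pow_succ, div_pow]; field_simp

/-- The walk generating function `∑ l, w^l_H(u) / ρ^(l+1)`: formally the entry at `u` of the
resolvent of the adjacency matrix of `H` at `ρ`, applied to the all-ones vector. By the convention
for `tsum` it is zero where the series diverges. -/
noncomputable def walkSeries (H : SimpleGraph V) (ρ : ℝ) (u : V) : ℝ :=
  ∑' l, (walkCount H l u : ℝ) / ρ ^ (l + 1)

lemma mul_walkSeries {ρ : ℝ} (hρ : ρ ≠ 0) {u : V}
    (hsummable : ∀ v ∈ H.neighborFinset u, Summable fun l => (walkCount H l v : ℝ) / ρ ^ (l + 1)) :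
    ρ * walkSeries H ρ u = 1 + ∑ v ∈ H.neighborFinset u, walkSeries H ρ v := by
  have htail : HasSum (fun l => (walkCount H (l + 1) u : ℝ) / ρ ^ (l + 1))
      (∑ v ∈ H.neighborFinset u, walkSeries H ρ v) := by
    simp only [walkCount_succ, Nat.cast_sum, sum_div]
    exact hasSum_sum fun v hv => (hsummable v hv).hasSum
  calc ρ * walkSeries H ρ u
      = ∑' l, (walkCount H l u : ℝ) / ρ ^ l := by
        rw [walkSeries, ← tsum_mul_left]
        exact tsum_congr fun l => by rw [pow_succ]; field_simp
    _ = 1 + ∑ v ∈ H.neighborFinset u, walkSeries H ρ v := by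
        have hsum : Summable fun l => (walkCount H l u : ℝ) / ρ ^ l :=
          (summable_nat_add_iff 1).1 htail.summable
        rw [hsum.tsum_eq_zero_add, htail.tsum_eq]
        simp [walkCount]

lemma sum_walkSeries_eq_card_div_add_tsum {A : Finset V} {ρ : ℝ}
    (hsummable : ∀ u ∈ A, Summable fun l => (walkCount H l u : ℝ) / ρ ^ (l + 1)) :
    ∑ u ∈ A, walkSeries H ρ u =
      (#A : ℝ) / ρ + ∑' i : ℕ, (∑ u ∈ A, (walkCount H (i + 1) u : ℝ)) / ρ ^ (i + 2) := by
  have hsum : Summable fun l => (∑ u ∈ A, (walkCount H l u : ℝ)) / ρ ^ (l + 1) := by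
    simpa only [sum_div] using summable_sum hsummable
  calc ∑ u ∈ A, walkSeries H ρ u
      = ∑' l, (∑ u ∈ A, (walkCount H l u : ℝ)) / ρ ^ (l + 1) := by
        simp only [walkSeries, sum_div, Summable.tsum_finsetSum hsummable]
    _ = (#A : ℝ) / ρ + ∑' i : ℕ, (∑ u ∈ A, (walkCount H (i + 1) u : ℝ)) / ρ ^ (i + 2) := by
        rw [hsum.tsum_eq_zero_add]
        simp [walkCount]

end Walks

theorem stmt_16_general {V : Type*} [Fintype V] {G H : SimpleGraph V} {A : Finset V} {Δ : ℕ}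
    (hA : ∀ u ∈ A, H.neighborFinset u ⊆ A) (hΔ : ∀ u ∈ A, H.degree u ≤ Δ)
    (hG : ∀ u ∈ A, ∀ v, G.Adj u v ↔ v ∉ A ∨ H.Adj u v)
    {ρ : ℝ} (hρ : Δ < |ρ|) {x : V → ℝ} (heig : G.adjMatrix ℝ *ᵥ x = ρ • x)
    (hnorm : ∑ v, x v = 1) :
    ∑ u ∈ A, x u = 1 - (1 + (#A : ℝ) / ρ +
      ∑' i : ℕ, (∑ u ∈ A, (walkCount H (i + 1) u : ℝ)) / ρ ^ (i + 2))⁻¹ := by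
  have hρ0 : ρ ≠ 0 := abs_pos.1 ((Nat.cast_nonneg Δ).trans_lt hρ)
  have hsummable : ∀ u ∈ A, Summable fun l => (walkCount H l u : ℝ) / ρ ^ (l + 1) :=
    fun u hu => summable_walkCount_div_pow hA hΔ hρ hu
  have hx : ∀ u ∈ A, ρ * x u = ∑ v ∈ Aᶜ, x v + ∑ v ∈ H.neighborFinset u, x v := fun u hu => by
    rw [← adjMatrix_mulVec_apply_eq_sum_compl_add (hA u hu) (hG u hu), heig, Pi.smul_apply,
      smul_eq_mul]
  have hz : ∀ u ∈ A, ρ * walkSeries H ρ u = 1 + ∑ v ∈ H.neighborFinset u, walkSeries H ρ v :=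
    fun u hu => mul_walkSeries hρ0 fun v hv => hsummable v (hA u hu hv)
  have hpair : (∑ v ∈ Aᶜ, x v) * ∑ u ∈ A, walkSeries H ρ u = 1 * ∑ u ∈ A, x u :=
    mul_sum_eq_mul_sum_of_mul_eq_add_sum_neighborFinset hA hx hz
  have htotal : ∑ u ∈ A, x u + ∑ v ∈ Aᶜ, x v = 1 := by rw [sum_add_sum_compl, hnorm]
  have hinv : (∑ v ∈ Aᶜ, x v) * (1 + ∑ u ∈ A, walkSeries H ρ u) = 1 := by
    linear_combination hpair + htotal
  rw [add_assoc, ← sum_walkSeries_eq_card_div_add_tsum hsummable, ← eq_inv_of_mul_eq_one_left hinv]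
  exact eq_sub_of_add_eq htotal

/-- In the setting of Theorem 1.3 (complete `r`-partite graph with graphs
`H_s` of maximum degree at most `Δ` embedded into the parts), if `ρ = ρ(G) > Δ` and `x` is
the Perron vector of `G` with `∑_v x_v = 1`, then for every part `s`,
`∑_{u ∈ V_s} x_u = 1 - 1/(1 + n_s/ρ + ∑_{i≥1} W^i(H_s)/ρ^{i+1})`. -/
theorem stmt_16 {V : Type*} [Fintype V] (r : ℕ) (hr : 2 ≤ r) (p : V → Fin r)
    (hparts : ∀ i : Fin r, 1 ≤ (Finset.univ.filter (fun v => p v = i)).card)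
    (Δ : ℕ) (H : SimpleGraph V)
    (hHin : ∀ u v, H.Adj u v → p u = p v)
    (hΔ : ∀ u, H.degree u ≤ Δ)
    (G : SimpleGraph V)
    (hG : ∀ u v, G.Adj u v ↔ (p u ≠ p v ∨ H.Adj u v))
    (hρ : spectralRad G > Δ)
    (x : V → ℝ) (hx : ∀ v, 0 ≤ x v) (hx0 : x ≠ 0)
    (heig : G.adjMatrix ℝ *ᵥ x = spectralRad G • x)
    (hnorm : ∑ v, x v = 1) :
    ∀ s : Fin r,
      ∑ u ∈ Finset.univ.filter (fun v => p v = s), x u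
        = 1 - (1 + ((Finset.univ.filter (fun v => p v = s)).card : ℝ) / spectralRad G +
            ∑' i : ℕ,
              (∑ u ∈ Finset.univ.filter (fun v => p v = s), (walkCount H (i + 1) u : ℝ)) /
                spectralRad G ^ (i + 2))⁻¹ := by
  intro s
  refine stmt_16_general (fun u hu v hv => ?_) (fun u _ => hΔ u) (fun u hu v => ?_)
    (hρ.trans_le (le_abs_self _)) heig hnorm
  · simp_all [← hHin u v]
  · simp_all [eq_comm]
end
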